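/- arXiv:2504.00807 — 2 statements merged into one kernel-verified Lean document; each statement's English description precedes it below -/
import Mathlib

section
/- Let T = (V, root, par) be a leafless, locally finite rooted directed tree of finite branching index k_T, let d = card(Chi^⟨k_T⟩(root)) (a finite positive integer) and let N = card{v ∈ V : dep(v) < k_T} (finite). Then Λ_T defines a bounded operator C_T on ℓ²(V), and there exist a unitary operator U from ℓ²(V) onto ℂ^N ⊕ (ℓ²(ℕ))^{⊕d} and a compact operator K on ℓ²(V) such that C_T = U* (0 ⊕ (C₀ ⊕ ⋯ ⊕ C₀)) U + K, where C₀ ⊕ ⋯ ⊕ C₀ is the d-fold direct sum of the classical Cesàro operator and 0 is the zero operator on ℂ^N. In particular, C_T is essentially equivalent to the d-fold direct sum of C₀. -/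
noncomputable section

open scoped ENNReal

/-- A rooted directed tree encoded by a vertex set `V`, a root, and a parent map. -/
structure TreeData (V : Type) where
  root : V
  par : V → V
  par_root : par root = root
  hroot : ∀ v : V, ∃ n : ℕ, par^[n] v = root

namespace TreeData

variable {V : Type}

open scoped Classical in
/-- The depth of a vertex: the least `n` with `par^[n] v = root`. -/
def dep (T : TreeData V) (v : V) : ℕ := Nat.find (T.hroot v)

/-- The Cesàro map `Λ_T`. -/
def cesaro (T : TreeData V) (f : V → ℂ) : V → ℂ := fun v =>
  ((T.dep v : ℂ) + 1)⁻¹ * ∑ j ∈ Finset.range (T.dep v + 1), f (T.par^[j] v)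

/-- The `n`-th level `Chi^⟨n⟩(root)`: vertices of depth `n`. -/
def level (T : TreeData V) (n : ℕ) : Set V := {v : V | T.dep v = n}

/-- The set of children of a vertex. -/
def chi (T : TreeData V) (u : V) : Set V := {v : V | v ≠ T.root ∧ T.par v = u}

end TreeData

/-- The Hilbert space `ℓ²(V)` of square-summable complex functions on `V`. -/
abbrev L2 (V : Type) : Type := lp (fun _ : V => ℂ) 2

/-- A branching vertex: a vertex with at least two children. -/
def TreeData.branching {V : Type} (T : TreeData V) (v : V) : Prop := 2 ≤ (T.chi v).encard

/-- `k` is the branching index of `T`: all branching vertices have depth `< k`, and `k` is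
least such (`k = 1 + max` of the branching depths, or `0` if there is no branching vertex). -/
def TreeData.isBranchingIndex {V : Type} (T : TreeData V) (k : ℕ) : Prop :=
  (∀ v : V, T.branching v → T.dep v + 1 ≤ k) ∧
  (k = 0 ∨ ∃ v : V, T.branching v ∧ T.dep v + 1 = k)


theorem TreeData.dep_spec {V : Type} (T : TreeData V) (v : V) : T.par^[T.dep v] v = T.root := by
  classical
  exact Nat.find_spec (T.hroot v)

theorem TreeData.dep_le {V : Type} (T : TreeData V) (v : V) (n : ℕ) (h : T.par^[n] v = T.root) :
    T.dep v ≤ n := by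
  classical
  exact Nat.find_min' (T.hroot v) h

theorem TreeData.dep_of_ne {V : Type} (T : TreeData V) (v : V) (h : v ≠ T.root) :
    T.dep v = T.dep (T.par v) + 1 := by
  apply le_antisymm
  · apply T.dep_le
    rw [Function.iterate_succ_apply]
    exact T.dep_spec _
  · have h1 := T.dep_spec v
    cases hd : T.dep v with
    | zero => rw [hd] at h1; exact absurd h1 h
    | succ m =>
      rw [hd, Function.iterate_succ_apply] at h1
      have := T.dep_le _ _ h1
      omega

theorem TreeData.dep_root {V : Type} (T : TreeData V) : T.dep T.root = 0 := by
  have := T.dep_le T.root 0 rfl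
  omega

theorem TreeData.dep_par {V : Type} (T : TreeData V) (v : V) :
    T.dep (T.par v) = T.dep v - 1 := by
  by_cases h : v = T.root
  · subst h; rw [T.par_root, T.dep_root]
  · have := T.dep_of_ne v h
    omega

theorem TreeData.dep_iter {V : Type} (T : TreeData V) (v : V) (j : ℕ) :
    T.dep (T.par^[j] v) = T.dep v - j := by
  induction j with
  | zero => rfl
  | succ j ih => rw [Function.iterate_succ_apply', T.dep_par, ih]; omega

theorem tree_equiv {V : Type} (T : TreeData V)
    (hleafless : ∀ u : V, (T.chi u).Nonempty)
    (kT : ℕ) (hkT : T.isBranchingIndex kT)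
    (d : ℕ) (hd : (T.level kT).encard = d)
    (N : ℕ) (hN : {v : V | T.dep v < kT}.encard = N) :
    ∃ e : V ≃ Fin N ⊕ (Fin d × ℕ), (∀ i, T.dep (e.symm (Sum.inl i)) < kT) ∧
      (∀ j n, T.dep (e.symm (Sum.inr (j, n))) = kT + n) ∧
      (∀ j n, T.par (e.symm (Sum.inr (j, n + 1))) = e.symm (Sum.inr (j, n))) := by
  classical
  choose s hs using hleafless
  have hs0 : ∀ u, s u ≠ T.root := fun u => (hs u).1
  have hs1 : ∀ u, T.par (s u) = u := fun u => (hs u).2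
  have hsd : ∀ u, T.dep (s u) = T.dep u + 1 := fun u => by
    rw [T.dep_of_ne _ (hs0 u), hs1]
  have hsn : ∀ n u, T.dep (s^[n] u) = T.dep u + n := by
    intro n u
    induction n with
    | zero => rfl
    | succ n ih => rw [Function.iterate_succ_apply', hsd, ih]; omega
  have huniq : ∀ v, kT < T.dep v → s (T.par v) = v := by
    intro v hv
    have hv0 : v ≠ T.root := by
      rintro rfl; rw [T.dep_root] at hv; omega
    have hnb : ¬ T.branching (T.par v) := by
      intro hb
      have := hkT.1 _ hb
      rw [← T.dep_of_ne v hv0] at this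
      omega
    unfold TreeData.branching at hnb
    have h1 : (T.chi (T.par v)).encard ≤ 1 := by
      rw [not_le] at hnb
      exact Order.le_of_lt_add_one (by rwa [one_add_one_eq_two])
    exact Set.encard_le_one_iff.1 h1 _ _ (hs _) ⟨hv0, rfl⟩
  have hSfin : {v : V | T.dep v < kT}.Finite := Set.finite_of_encard_eq_coe hN
  have hLfin : (T.level kT).Finite := Set.finite_of_encard_eq_coe hd
  have : Finite {v : V | T.dep v < kT} := hSfin
  have : Finite (T.level kT) := hLfin
  have a : Fin N ≃ {v : V | T.dep v < kT} := by
    refine (Finite.equivFinOfCardEq ?_).symm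
    rw [Nat.card_coe_set_eq, Set.ncard_def, hN]; rfl
  have b : Fin d ≃ T.level kT := by
    refine (Finite.equivFinOfCardEq ?_).symm
    rw [Nat.card_coe_set_eq, Set.ncard_def, hd]; rfl
  have hb : ∀ j, T.dep (b j) = kT := fun j => (b j).2
  have ha : ∀ j, T.dep (a j) < kT := fun j => (a j).2
  let φ : Fin N ⊕ (Fin d × ℕ) → V := Sum.elim (fun i => (a i : V)) (fun p => s^[p.2] (b p.1 : V))
  have hφ : Function.Bijective φ := by
    constructor
    · rintro (i | ⟨j, n⟩) (i' | ⟨j', n'⟩) h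
      · simp only [φ, Sum.elim_inl] at h
        rw [a.injective (Subtype.ext h)]
      · have := congrArg T.dep h
        simp only [φ, Sum.elim_inl, Sum.elim_inr, hsn, hb] at this
        have := ha i
        omega
      · have := congrArg T.dep h
        simp only [φ, Sum.elim_inl, Sum.elim_inr, hsn, hb] at this
        have := ha i'
        omega
      · have := congrArg T.dep h
        simp only [φ, Sum.elim_inr, hsn, hb] at this
        obtain rfl : n = n' := by omega
        simp only [φ, Sum.elim_inr] at h
        have hinj : Function.Injective s := Function.LeftInverse.injective hs1
        rw [b.injective (Subtype.ext (hinj.iterate n h))]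
    · intro v
      by_cases hv : T.dep v < kT
      · exact ⟨Sum.inl (a.symm ⟨v, hv⟩), by simp [φ]⟩
      · obtain ⟨n, hn⟩ := Nat.exists_eq_add_of_le (not_lt.1 hv)
        suffices h : ∃ j, s^[n] (b j : V) = v by
          obtain ⟨j, hj⟩ := h
          exact ⟨Sum.inr (j, n), hj⟩
        clear hv
        induction n generalizing v with
        | zero => exact ⟨b.symm ⟨v, hn⟩, by simp⟩
        | succ n ih =>
          obtain ⟨j, hj⟩ := ih (T.par v) (by rw [T.dep_par]; omega)
          refine ⟨j, ?_⟩
          rw [Function.iterate_succ_apply', hj, huniq v (by omega)]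
  refine ⟨(Equiv.ofBijective φ hφ).symm, ?_, ?_, ?_⟩
  · intro i; exact ha i
  · intro j n
    change T.dep (s^[n] (b j : V)) = _
    rw [hsn, hb]
  · intro j n
    change T.par (s^[n+1] (b j : V)) = s^[n] (b j : V)
    rw [Function.iterate_succ_apply', hs1]

theorem hasSum_pieces {V : Type} {N d : ℕ} (e : V ≃ Fin N ⊕ (Fin d × ℕ)) (h : V → ℝ)
    (h0 : ∀ v, 0 ≤ h v) (hs : ∀ j, Summable fun n => h (e.symm (Sum.inr (j, n)))) :
    HasSum h (∑ i, h (e.symm (Sum.inl i)) + ∑ j, ∑' n, h (e.symm (Sum.inr (j, n)))) := by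
  rw [← e.symm.hasSum_iff]
  apply HasSum.sum
  · exact hasSum_fintype _
  · have hS : Summable ((h ∘ e.symm) ∘ Sum.inr) :=
      (summable_prod_of_nonneg (fun p => h0 _)).2 ⟨hs, Summable.of_finite⟩
    have := hS.hasSum
    rw [hS.tsum_prod, tsum_fintype] at this
    exact this

theorem two_toReal_pos : 0 < (2 : ℝ≥0∞).toReal := by norm_num

theorem L2_summable {V : Type} (f : L2 V) : Summable fun v => ‖f v‖ ^ 2 := by
  simpa using (lp.memℓp f).summable two_toReal_pos

theorem L2_mem {V : Type} (f : V → ℂ) (h : Summable fun v => ‖f v‖ ^ 2) : Memℓp f 2 :=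
  memℓp_gen (by simpa using h)

theorem L2_norm_sq {V : Type} (f : L2 V) : ‖f‖ ^ 2 = ∑' v, ‖f v‖ ^ 2 := by
  simpa using lp.norm_rpow_eq_tsum two_toReal_pos f

def pieceL2 {V : Type} {N d : ℕ} (e : V ≃ Fin N ⊕ (Fin d × ℕ)) (f : L2 V) (j : Fin d) : L2 ℕ :=
  ⟨fun n => f (e.symm (Sum.inr (j, n))), L2_mem _ ((L2_summable f).comp_injective
    (i := fun n => e.symm (Sum.inr (j, n))) (fun a b h => by simpa using h))⟩

theorem pieceL2_apply {V : Type} {N d : ℕ} (e : V ≃ Fin N ⊕ (Fin d × ℕ)) (f : L2 V) (j : Fin d)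
    (n : ℕ) : pieceL2 e f j n = f (e.symm (Sum.inr (j, n))) := rfl

def unitaryLI {V : Type} {N d : ℕ} (e : V ≃ Fin N ⊕ (Fin d × ℕ)) :
    L2 V →ₗᵢ[ℂ] WithLp 2 (EuclideanSpace ℂ (Fin N) × PiLp 2 (fun _ : Fin d => L2 ℕ)) where
  toFun f := WithLp.toLp 2 (WithLp.toLp 2 (fun i => f (e.symm (Sum.inl i))),
    WithLp.toLp 2 (fun j => pieceL2 e f j))
  map_add' f g := rfl
  map_smul' c f := rfl
  norm_map' f := by
    rw [← sq_eq_sq₀ (norm_nonneg _) (norm_nonneg _)]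
    change ‖WithLp.toLp 2 (WithLp.toLp 2 (fun i => f (e.symm (Sum.inl i))),
      WithLp.toLp 2 (fun j => pieceL2 e f j))‖ ^ 2 = _
    rw [WithLp.prod_norm_sq_eq_of_L2, EuclideanSpace.norm_sq_eq, PiLp.norm_sq_eq_of_L2,
      L2_norm_sq]
    have := hasSum_pieces e (fun v => ‖f v‖ ^ 2) (fun v => by positivity)
      (fun j => L2_summable (pieceL2 e f j))
    rw [this.tsum_eq]
    simp only [L2_norm_sq]
    rfl

theorem exists_unitary {V : Type} {N d : ℕ} (e : V ≃ Fin N ⊕ (Fin d × ℕ)) :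
    ∃ U : L2 V ≃ₗᵢ[ℂ] WithLp 2 (EuclideanSpace ℂ (Fin N) × PiLp 2 (fun _ : Fin d => L2 ℕ)),
      (∀ f i, ((U f).ofLp.1) i = f (e.symm (Sum.inl i))) ∧
      (∀ f j n, ((U f).ofLp.2 j) n = f (e.symm (Sum.inr (j, n)))) := by
  have hsurj : Function.Surjective (unitaryLI e) := by
    intro X
    let g : V → ℂ := fun v => Sum.elim (fun i => X.ofLp.1 i) (fun p => X.ofLp.2 p.1 p.2) (e v)
    have hg : Memℓp g 2 := by
      apply L2_mem
      refine (hasSum_pieces e (fun v => ‖g v‖ ^ 2) (fun v => by positivity) ?_).summable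
      intro j
      simpa [g] using L2_summable (X.ofLp.2 j)
    refine ⟨⟨g, hg⟩, ?_⟩
    apply WithLp.ofLp_injective
    refine Prod.ext ?_ ?_
    · ext i
      change g (e.symm (Sum.inl i)) = _
      simp [g]
    · ext j n
      change g (e.symm (Sum.inr (j, n))) = _
      simp [g]
  refine ⟨LinearIsometryEquiv.ofSurjective (unitaryLI e) hsurj, fun f i => rfl, fun f j n => rfl⟩

theorem exists_diag {V : Type} (w : V → ℂ) (c : ℝ) (hw : ∀ v, ‖w v‖ ≤ c) (hc : 0 ≤ c) :
    ∃ D : L2 V →L[ℂ] L2 V, (∀ f v, D f v = w v * f v) ∧ ‖D‖ ≤ c := by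
  have hb : ∀ (f : L2 V) v, ‖w v * f v‖ ≤ ‖((c : ℂ) • f) v‖ := by
    intro f v
    rw [lp.coeFn_smul, Pi.smul_apply, smul_eq_mul, norm_mul, norm_mul, Complex.norm_real,
      Real.norm_of_nonneg hc]
    exact mul_le_mul_of_nonneg_right (hw v) (norm_nonneg _)
  have hm : ∀ f : L2 V, Memℓp (fun v => w v * f v) 2 := fun f =>
    (lp.memℓp ((c : ℂ) • f)).mono' (hb f)
  let L : L2 V →ₗ[ℂ] L2 V :=
    { toFun := fun f => ⟨fun v => w v * f v, hm f⟩
      map_add' := fun f g => by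
        ext v
        change w v * (f v + g v) = w v * f v + w v * g v
        ring
      map_smul' := fun a f => by
        ext v
        change w v * (a * f v) = a * (w v * f v)
        ring }
  refine ⟨L.mkContinuous c ?_, fun f v => rfl, LinearMap.mkContinuous_norm_le _ hc _⟩
  intro f
  have h1 : ‖L f‖ ≤ ‖(c : ℂ) • f‖ := lp.norm_mono (by norm_num) (hb f)
  rwa [norm_smul, Complex.norm_real, Real.norm_of_nonneg hc] at h1

theorem rank_one_compact {V : Type} (p : V) (g : L2 V) :
    IsCompactOperator ⇑((lp.evalCLM ℂ (fun _ : V => ℂ) 2 p).smulRight g) := by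
  have h1 : IsCompactOperator ⇑(lp.evalCLM ℂ (fun _ : V => ℂ) 2 p) :=
    isCompactOperator_of_locallyCompactSpace_dom (lp.evalCLM ℂ (fun _ : V => ℂ) 2 p)
  exact h1.clm_comp ((1 : ℂ →L[ℂ] ℂ).smulRight g)

theorem sum_compact {V ι : Type} (s : Finset ι) (F : ι → L2 V →L[ℂ] L2 V)
    (h : ∀ i ∈ s, IsCompactOperator ⇑(F i)) : IsCompactOperator ⇑(∑ i ∈ s, F i) := 
  Submodule.sum_mem (compactOperator (RingHom.id ℂ) (L2 V) (L2 V)) h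

theorem diag_compact {V : Type} (w : V → ℂ) (hw : ∀ ε > 0, {v | ε ≤ ‖w v‖}.Finite)
    (D : L2 V →L[ℂ] L2 V) (hD : ∀ f v, D f v = w v * f v) : IsCompactOperator ⇑D := by
  classical
  let F : Finset V → L2 V →L[ℂ] L2 V := fun s => ∑ p ∈ s,
    (lp.evalCLM ℂ (fun _ : V => ℂ) 2 p).smulRight (lp.single 2 p (w p))
  have hF : ∀ s f v, F s f v = if v ∈ s then w v * f v else 0 := by
    intro s f v
    simp only [F, sum_apply, lp.coeFn_sum, Finset.sum_apply,
      ContinuousLinearMap.smulRight_apply, lp.coeFn_smul, Pi.smul_apply, lp.single_apply,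
      Pi.single_apply, smul_eq_mul]
    simp [Finset.sum_ite_eq, mul_comm]
    rfl
  refine isCompactOperator_of_tendsto (l := Filter.atTop) (F := F) ?_
    (Filter.Eventually.of_forall fun s => sum_compact s _ fun p _ => rank_one_compact p _)
  rw [Metric.tendsto_atTop]
  intro ε hε
  refine ⟨(hw (ε / 2) (by positivity)).toFinset, fun s hs => ?_⟩
  obtain ⟨E, hE, hEn⟩ := exists_diag (fun v => if v ∈ s then 0 else - w v) (ε / 2) (by
    intro v
    by_cases hv : v ∈ s
    · simp [hv]; positivity
    · simp only [hv, if_false, norm_neg]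
      by_contra hcon
      exact hv (hs (by simpa using (not_le.1 hcon).le))) (by positivity)
  have : F s - D = E := by
    ext f v
    change F s f v - D f v = E f v
    rw [hF, hD, hE]
    split_ifs <;> ring
  rw [dist_eq_norm, this]
  linarith

theorem count_le_one {V : Type} [DecidableEq V] (T : TreeData V) (p v : V) :
    ‖∑ j ∈ Finset.range (T.dep v + 1), if T.par^[j] v = p then (1 : ℂ) else 0‖ ≤ 1 := by
  rw [Finset.sum_boole, Complex.norm_natCast]
  norm_cast
  rw [Finset.card_le_one]
  intro a ha b hb
  simp only [Finset.mem_filter, Finset.mem_range] at ha hb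
  have h1 := T.dep_iter v a
  have h2 := T.dep_iter v b
  rw [ha.2] at h1
  rw [hb.2] at h2
  omega

theorem summable_inv_dep {V : Type} (T : TreeData V) {N d kT : ℕ} (e : V ≃ Fin N ⊕ (Fin d × ℕ))
    (he : ∀ j n, T.dep (e.symm (Sum.inr (j, n))) = kT + n) :
    Summable fun v => ‖((T.dep v : ℂ) + 1)⁻¹‖ ^ 2 := by
  refine (hasSum_pieces e _ (fun v => by positivity) ?_).summable
  intro j
  have h := (summable_nat_add_iff (f := fun n : ℕ => 1 / (n : ℝ) ^ 2) (kT + 1)).2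
    (Real.summable_one_div_nat_pow.2 (by norm_num))
  refine h.congr fun n => ?_
  rw [he, norm_inv, inv_pow, one_div]
  have : ((kT + n : ℕ) : ℂ) + 1 = ((n + (kT + 1) : ℕ) : ℂ) := by push_cast; ring
  rw [this, Complex.norm_natCast]

theorem par_iter_e {V : Type} (T : TreeData V) {N d : ℕ} (e : V ≃ Fin N ⊕ (Fin d × ℕ))
    (he : ∀ j n, T.par (e.symm (Sum.inr (j, n + 1))) = e.symm (Sum.inr (j, n)))
    (j : Fin d) (n m : ℕ) :
    T.par^[m] (e.symm (Sum.inr (j, n + m))) = e.symm (Sum.inr (j, n)) := by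
  induction m with
  | zero => rfl
  | succ m ih => rw [Function.iterate_succ_apply, ← add_assoc, he, ih]

theorem exists_M {N d : ℕ} (C0 : L2 ℕ →L[ℂ] L2 ℕ) :
    ∃ M : WithLp 2 (EuclideanSpace ℂ (Fin N) × PiLp 2 (fun _ : Fin d => L2 ℕ)) →L[ℂ]
        WithLp 2 (EuclideanSpace ℂ (Fin N) × PiLp 2 (fun _ : Fin d => L2 ℕ)),
      ∀ X, M X = (WithLp.equiv 2 _).symm
            ((0 : EuclideanSpace ℂ (Fin N)),
             (WithLp.equiv 2 (∀ _ : Fin d, L2 ℕ)).symm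
               (fun i => C0 (((WithLp.equiv 2 _) X).2 i))) := by
  refine ⟨⟨⟨⟨fun X => WithLp.toLp 2 ((0 : EuclideanSpace ℂ (Fin N)),
      WithLp.toLp 2 (fun i => C0 (X.ofLp.2 i))), ?_⟩, ?_⟩, ?_⟩, fun X => rfl⟩
  · intro X Y
    apply WithLp.ofLp_injective
    refine Prod.ext ?_ ?_
    · simp
    · apply WithLp.ofLp_injective
      funext i
      simp
  · intro c X
    apply WithLp.ofLp_injective
    refine Prod.ext ?_ ?_
    · simp
    · apply WithLp.ofLp_injective
      funext i
      simp
  · change Continuous fun X : WithLp 2 (EuclideanSpace ℂ (Fin N) × PiLp 2 (fun _ : Fin d => L2 ℕ)) =>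
      WithLp.toLp 2 ((0 : EuclideanSpace ℂ (Fin N)),
      WithLp.toLp 2 (fun i => C0 (X.ofLp.2 i)))
    fun_prop

/-- A leafless, locally finite rooted directed tree of finite branching index
`k_T` with `d = card Chi^⟨k_T⟩(root)` and `N = card {v : dep v < k_T}` has a bounded Cesàro
operator `C_T`, which equals `U* (0 ⊕ C₀ ⊕ ⋯ ⊕ C₀) U + K` for some unitary
`U : ℓ²(V) → ℂ^N ⊕ (ℓ²(ℕ))^{⊕ d}` and compact `K`; i.e. `C_T` is essentially equivalent to the
`d`-fold direct sum of the classical Cesàro operator `C₀`. -/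
theorem cesaro_essentially_direct_sum {V : Type} [Countable V] [Infinite V]
    (T : TreeData V)
    (hleafless : ∀ u : V, (T.chi u).Nonempty)
    (hlocfin : ∀ u : V, (T.chi u).Finite)
    (kT : ℕ) (hkT : T.isBranchingIndex kT)
    (d : ℕ) (hd : (T.level kT).encard = d) (hd0 : 0 < d)
    (N : ℕ) (hN : {v : V | T.dep v < kT}.encard = N)
    (C0 : L2 ℕ →L[ℂ] L2 ℕ)
    (hC0 : ∀ (x : L2 ℕ) (n : ℕ), C0 x n = ((n : ℂ) + 1)⁻¹ * ∑ j ∈ Finset.range (n + 1), x j) :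
    ∃ (C : L2 V →L[ℂ] L2 V)
      (U : L2 V ≃ₗᵢ[ℂ] WithLp 2 (EuclideanSpace ℂ (Fin N) × PiLp 2 (fun _ : Fin d => L2 ℕ)))
      (K : L2 V →L[ℂ] L2 V),
      (∀ (f : L2 V) (v : V), C f v = T.cesaro ⇑f v) ∧
      IsCompactOperator ⇑K ∧
      ∀ f : L2 V,
        C f = U.symm ((WithLp.equiv 2 _).symm
            ((0 : EuclideanSpace ℂ (Fin N)),
             (WithLp.equiv 2 (∀ _ : Fin d, L2 ℕ)).symm
               (fun i => C0 (((WithLp.equiv 2 _) (U f)).2 i)))) + K f := by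
  classical
  obtain ⟨e, he1, he2, he3⟩ := tree_equiv T hleafless kT hkT d hd N hN
  obtain ⟨U, hU1, hU2⟩ := exists_unitary e
  obtain ⟨M, hM⟩ := exists_M (N := N) (d := d) C0
  have hSfin : {v : V | T.dep v < kT}.Finite := Set.finite_of_encard_eq_coe hN
  let A : L2 V →L[ℂ] L2 V :=
    (U.symm.toContinuousLinearEquiv : _ →L[ℂ] L2 V) ∘L M ∘L (U.toContinuousLinearEquiv : L2 V →L[ℂ] _)
  have hA : ∀ f, A f = U.symm (M (U f)) := fun f => rfl
  have hUA : ∀ f, U (A f) = M (U f) := fun f => by rw [hA, U.apply_symm_apply]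
  have hA1 : ∀ f i, A f (e.symm (Sum.inl i)) = 0 := by
    intro f i
    rw [← hU1, hUA, hM]
    rfl
  have hA2 : ∀ f j n, A f (e.symm (Sum.inr (j, n))) =
      ((n : ℂ) + 1)⁻¹ * ∑ m ∈ Finset.range (n + 1), f (e.symm (Sum.inr (j, m))) := by
    intro f j n
    rw [← hU2, hUA, hM]
    refine (hC0 _ n).trans ?_
    congr 1
    exact Finset.sum_congr rfl fun m _ => hU2 f j m
  have hsum := summable_inv_dep T e he2
  let G : V → L2 V := fun p => ⟨fun v => ((T.dep v : ℂ) + 1)⁻¹ *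
    ∑ j ∈ Finset.range (T.dep v + 1), if T.par^[j] v = p then (1 : ℂ) else 0, by
      refine (L2_mem _ hsum).mono' fun v => ?_
      rw [norm_mul]
      exact mul_le_of_le_one_right (norm_nonneg _) (count_le_one T p v)⟩
  have hG : ∀ p v, G p v = ((T.dep v : ℂ) + 1)⁻¹ *
    ∑ j ∈ Finset.range (T.dep v + 1), if T.par^[j] v = p then (1 : ℂ) else 0 := fun p v => rfl
  let F : L2 V →L[ℂ] L2 V := ∑ p ∈ hSfin.toFinset,
    (lp.evalCLM ℂ (fun _ : V => ℂ) 2 p).smulRight (G p)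
  have hFc : IsCompactOperator ⇑F := sum_compact _ _ fun p _ => rank_one_compact p _
  have hF : ∀ f v, F f v = ((T.dep v : ℂ) + 1)⁻¹ *
      ∑ j ∈ Finset.range (T.dep v + 1), if T.dep v - j < kT then f (T.par^[j] v) else 0 := by
    intro f v
    have h1 : F f v = ∑ p ∈ hSfin.toFinset, f p * G p v := by
      simp only [F, sum_apply, lp.coeFn_sum, Finset.sum_apply,
        ContinuousLinearMap.smulRight_apply, lp.coeFn_smul, Pi.smul_apply, smul_eq_mul]
      rfl
    rw [h1]
    simp only [hG, Finset.mul_sum]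
    rw [Finset.sum_comm]
    refine Finset.sum_congr rfl fun j _ => ?_
    rw [← T.dep_iter]
    simp only [mul_ite, mul_one, mul_zero, Finset.sum_ite_eq, Set.Finite.mem_toFinset,
      Set.mem_ofPred_eq]
    split_ifs <;> ring
  let w : V → ℂ := fun v => -(kT : ℂ) * ((T.dep v : ℂ) + 1)⁻¹
  have hwb : ∀ v, ‖w v‖ ≤ kT := by
    intro v
    simp only [w, norm_mul, norm_neg, Complex.norm_natCast, norm_inv]
    refine mul_le_of_le_one_right (by positivity) (inv_le_one_of_one_le₀ ?_)
    have : (T.dep v : ℂ) + 1 = ((T.dep v + 1 : ℕ) : ℂ) := by push_cast; ring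
    rw [this, Complex.norm_natCast]
    norm_cast
    omega
  obtain ⟨D, hD, -⟩ := exists_diag w kT hwb (by positivity)
  have hDc : IsCompactOperator ⇑D := by
    refine diag_compact w ?_ D hD
    intro ε hε
    have hs : Summable fun v => ‖w v‖ ^ 2 := by
      simp only [w, norm_mul, mul_pow]
      exact hsum.mul_left _
    have h2 := hs.tendsto_cofinite_zero.eventually (gt_mem_nhds (show 0 < ε ^ 2 by positivity))
    refine (Filter.eventually_cofinite.1 h2).subset fun v hv => ?_
    simp only [Set.mem_ofPred_eq, not_lt] at hv ⊢
    exact pow_le_pow_left₀ hε.le hv 2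
  refine ⟨A + (D ∘L A + F), U, D ∘L A + F, ?_, (hDc.comp_clm A).add hFc, ?_⟩
  · intro f v
    change A f v + (D (A f) v + F f v) = _
    rw [hD, hF]
    obtain ⟨x, rfl⟩ := e.symm.surjective v
    unfold TreeData.cesaro
    rcases x with i | ⟨j, n⟩
    · rw [hA1, mul_zero, zero_add, zero_add]
      congr 1
      refine Finset.sum_congr rfl fun m _ => ?_
      rw [if_pos]
      have := he1 i
      omega
    · have hs1 : ∑ m ∈ Finset.range (n + 1), f (e.symm (Sum.inr (j, m))) =
          ∑ m ∈ Finset.range (n + 1), f (T.par^[m] (e.symm (Sum.inr (j, n)))) := by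
        rw [← Finset.sum_range_reflect]
        refine Finset.sum_congr rfl fun m hm => ?_
        rw [Finset.mem_range] at hm
        obtain ⟨a, rfl⟩ := Nat.exists_eq_add_of_le' (Nat.le_of_lt_succ hm)
        rw [par_iter_e T e he3 j a m]
        rw [show a + m + 1 - 1 - m = a by omega]
      have hs2 : ∑ m ∈ Finset.range (kT + n + 1), f (T.par^[m] (e.symm (Sum.inr (j, n)))) =
          ∑ m ∈ Finset.range (n + 1), f (T.par^[m] (e.symm (Sum.inr (j, n)))) +
          ∑ m ∈ Finset.range (kT + n + 1), if kT + n - m < kT then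
            f (T.par^[m] (e.symm (Sum.inr (j, n)))) else 0 := by
        have : Finset.range (n + 1) = {m ∈ Finset.range (kT + n + 1) | ¬ (kT + n - m < kT)} := by
          ext m
          simp only [Finset.mem_range, Finset.mem_filter]
          omega
        rw [this, Finset.sum_filter, ← Finset.sum_add_distrib]
        refine Finset.sum_congr rfl fun m _ => ?_
        split_ifs <;> simp_all
      rw [hA2, hs1]
      simp only [w, he2]
      rw [hs2]
      have hn1 : (n : ℂ) + 1 ≠ 0 := by exact_mod_cast Nat.succ_ne_zero n
      have hn2 : ((kT + n : ℕ) : ℂ) + 1 ≠ 0 := by exact_mod_cast Nat.succ_ne_zero (kT + n)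
      have key : ∀ S R : ℂ, ((n : ℂ) + 1)⁻¹ * S + (-(kT : ℂ) * (((kT + n : ℕ) : ℂ) + 1)⁻¹ *
          (((n : ℂ) + 1)⁻¹ * S) + (((kT + n : ℕ) : ℂ) + 1)⁻¹ * R) =
          (((kT + n : ℕ) : ℂ) + 1)⁻¹ * (S + R) := by
        intro S R
        field_simp
        push_cast
        ring
      exact key _ _
  · intro f
    rw [← hM, ← hA]
    rfl
end
end

section
/- Let T = (V, root, par) be a leafless, locally finite rooted directed tree of finite branching index, and suppose the bounded Cesàro operator C_T on ℓ²(V) is hyponormal, i.e. ‖C_T* f‖ ≤ ‖C_T f‖ for all f ∈ ℓ²(V). Then T has no branching vertex: card(Chi(v)) = 1 for every v ∈ V (so T is isomorphic to the chain tree on ℕ in which each n has the unique child n+1). -/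
noncomputable section

open scoped ENNReal

namespace TreeData
variable {V : Type}

lemma dep_spec_s9 (T : TreeData V) (v : V) : T.par^[T.dep v] v = T.root := by
  classical
  unfold dep
  exact Nat.find_spec (T.hroot v)

lemma dep_le_s9 (T : TreeData V) {v : V} {n : ℕ} (h : T.par^[n] v = T.root) : T.dep v ≤ n := by
  classical
  unfold dep
  exact Nat.find_min' (T.hroot v) h

lemma dep_root_s9 (T : TreeData V) : T.dep T.root = 0 :=
  Nat.le_zero.mp (T.dep_le_s9 (n := 0) rfl)

lemma dep_pos (T : TreeData V) {v : V} (h : v ≠ T.root) : 0 < T.dep v := by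
  rcases Nat.eq_zero_or_pos (T.dep v) with h0 | h0
  · have := T.dep_spec_s9 v
    rw [h0] at this
    exact absurd this h
  · exact h0

lemma dep_child (T : TreeData V) {v : V} (h : v ≠ T.root) : T.dep v = T.dep (T.par v) + 1 := by
  have hp := T.dep_pos h
  apply le_antisymm
  · apply T.dep_le_s9
    rw [Function.iterate_succ_apply]
    exact T.dep_spec_s9 _
  · have h1 := T.dep_spec_s9 v
    obtain ⟨k, hk⟩ := Nat.exists_eq_succ_of_ne_zero hp.ne'
    rw [hk, Nat.succ_eq_add_one, Function.iterate_succ_apply] at h1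
    have := T.dep_le_s9 h1
    omega

lemma dep_iter_s9 (T : TreeData V) (j : ℕ) (v : V) (h : j ≤ T.dep v) :
    T.dep (T.par^[j] v) + j = T.dep v := by
  induction j generalizing v with
  | zero => rfl
  | succ j ih =>
    have hv : v ≠ T.root := by
      rintro rfl
      rw [T.dep_root_s9] at h
      omega
    have h1 := T.dep_child hv
    have := ih (T.par v) (by omega)
    rw [Function.iterate_succ_apply]
    omega

lemma tail_bound (n : ℕ) :
    ∑' k : ℕ, (((n : ℝ) + k + 1)⁻¹) ^ 2 ≤ ((n : ℝ) + 1 / 2)⁻¹ := by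
  apply Real.tsum_le_of_sum_range_le
  · intro k; positivity
  · intro N
    have key : ∑ k ∈ Finset.range N, (((n : ℝ) + k + 1)⁻¹) ^ 2
        ≤ ((n : ℝ) + 1 / 2)⁻¹ - ((n : ℝ) + N + 1 / 2)⁻¹ := by
      induction N with
      | zero => simp
      | succ N ih =>
        rw [Finset.sum_range_succ]
        have hx : (0 : ℝ) ≤ (n : ℝ) + N := by positivity
        have : (((n : ℝ) + N + 1)⁻¹) ^ 2
            ≤ ((n : ℝ) + N + 1 / 2)⁻¹ - ((n : ℝ) + (N + 1 : ℕ) + 1 / 2)⁻¹ := by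
          push_cast
          rw [← add_assoc]
          generalize (n : ℝ) + N = x at hx
          rw [inv_sub_inv (by positivity) (by positivity), inv_pow, inv_eq_one_div,
            div_le_div_iff₀ (by positivity) (by positivity)]
          nlinarith
        linarith
    have : 0 ≤ ((n : ℝ) + N + 1 / 2)⁻¹ := by positivity
    linarith

open scoped Classical in
lemma count_le (T : TreeData V) (u v : V) :
    ((Finset.range (T.dep v + 1)).filter (fun j => T.par^[j] v = u)).card ≤ 1 := by
  rw [Finset.card_le_one]
  intro a ha b hb
  simp only [Finset.mem_filter, Finset.mem_range] at ha hb
  have h1 := T.dep_iter_s9 a v (by omega)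
  have h2 := T.dep_iter_s9 b v (by omega)
  rw [ha.2] at h1
  rw [hb.2] at h2
  omega

open scoped Classical in
/-- basis vector -/
def bv (u : V) : L2 V := lp.single 2 u (1 : ℂ)

open scoped Classical in
lemma bv_apply (u v : V) : (bv u : V → ℂ) v = if v = u then 1 else 0 := by
  unfold bv
  rw [lp.single_apply]
  simp [Pi.single_apply]

lemma inner_bv (u : V) (f : L2 V) : inner ℂ (bv u) f = f u := by
  classical
  unfold bv
  rw [lp.inner_single_left]
  simp

open scoped Classical in
lemma C_bv (T : TreeData V) (C : L2 V →L[ℂ] L2 V)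
    (hC : ∀ (f : L2 V) (v : V), C f v = T.cesaro ⇑f v) (u v : V) :
    C (bv u) v = ((T.dep v : ℂ) + 1)⁻¹ *
      (((Finset.range (T.dep v + 1)).filter (fun j => T.par^[j] v = u)).card : ℂ) := by
  rw [hC, cesaro]
  simp only [bv_apply]
  rw [Finset.sum_boole]

lemma C_bv_zero (T : TreeData V) (C : L2 V →L[ℂ] L2 V)
    (hC : ∀ (f : L2 V) (v : V), C f v = T.cesaro ⇑f v) (u v : V)
    (h : ∀ j, j ≤ T.dep v → T.par^[j] v ≠ u) : C (bv u) v = 0 := by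
  rw [hC, cesaro, Finset.sum_eq_zero, mul_zero]
  intro j hj
  rw [bv_apply, if_neg]
  exact h j (by simpa [Nat.lt_succ_iff] using hj)

lemma C_bv_norm (T : TreeData V) (C : L2 V →L[ℂ] L2 V)
    (hC : ∀ (f : L2 V) (v : V), C f v = T.cesaro ⇑f v) (u v : V) :
    ‖C (bv u) v‖ ≤ ((T.dep v : ℝ) + 1)⁻¹ := by
  classical
  rw [T.C_bv C hC, norm_mul, norm_inv]
  have h1 : ‖(T.dep v : ℂ) + 1‖ = (T.dep v : ℝ) + 1 := by
    have : ((T.dep v : ℂ) + 1) = ((T.dep v + 1 : ℕ) : ℂ) := by push_cast; rfl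
    rw [this, Complex.norm_natCast]; push_cast; rfl
  rw [h1, Complex.norm_natCast]
  have h2 := T.count_le u v
  have h3 : ((((Finset.range (T.dep v + 1)).filter (fun j => T.par^[j] v = u)).card : ℕ) : ℝ) ≤ 1 := by
    exact_mod_cast h2
  exact mul_le_of_le_one_right (by positivity) h3

lemma C_orth (T : TreeData V) (C : L2 V →L[ℂ] L2 V)
    (hC : ∀ (f : L2 V) (v : V), C f v = T.cesaro ⇑f v) (x y : V) (hxy : x ≠ y)
    (hd : T.dep x = T.dep y) : inner ℂ (C (bv x)) (C (bv y)) = 0 := by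
  rw [lp.inner_eq_tsum]
  have : ∀ v, inner ℂ (C (bv x) v) (C (bv y) v) = 0 := by
    intro v
    by_cases h : ∃ j, j ≤ T.dep v ∧ T.par^[j] v = x
    · obtain ⟨j, hj, hjx⟩ := h
      rw [T.C_bv_zero C hC y v, inner_zero_right]
      intro i hi hiy
      have h1 := T.dep_iter_s9 j v hj
      have h2 := T.dep_iter_s9 i v hi
      rw [hjx] at h1
      rw [hiy] at h2
      have : i = j := by omega
      subst this
      exact hxy (hjx.symm.trans hiy)
    · push Not at h
      rw [T.C_bv_zero C hC x v h, inner_zero_left]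
  simp only [this, tsum_zero]

lemma C_norm_sq (T : TreeData V) (C : L2 V →L[ℂ] L2 V)
    (hC : ∀ (f : L2 V) (v : V), C f v = T.cesaro ⇑f v) 
    (hleafless : ∀ u : V, (T.chi u).Nonempty) (u : V)
    (hu : ∀ v, T.dep u ≤ T.dep v → ¬ T.branching v) :
    ‖C (bv u)‖ ^ 2 ≤ ((T.dep u : ℝ) + 1 / 2)⁻¹ := by
  choose c hc using hleafless
  let s : ℕ → V := fun k => c^[k] u
  have hs : ∀ k, s (k + 1) = c (s k) := fun k => Function.iterate_succ_apply' c k u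
  have hsd : ∀ k, T.dep (s k) = T.dep u + k := by
    intro k
    induction k with
    | zero => rfl
    | succ k ih =>
      have h := hc (s k)
      rw [hs, T.dep_child h.1, h.2, ih]
      rfl
  have hinj : Function.Injective s := by
    intro a b hab
    have h1 := hsd a
    rw [hab, hsd b] at h1
    omega
  have huniq : ∀ j v, T.dep v = T.dep u + j → T.par^[j] v = u → v = s j := by
    intro j
    induction j with
    | zero => intro v _ h; exact h
    | succ j ih =>
      intro v hv h
      have hvr : v ≠ T.root := by
        rintro rfl
        rw [T.dep_root_s9] at hv
        omega
      have hd := T.dep_child hvr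
      have hp := ih (T.par v) (by omega) (by rwa [Function.iterate_succ_apply] at h)
      have hnb := hu (s j) (by rw [hsd]; omega)
      unfold branching at hnb
      rw [hs]
      by_contra hne
      apply hnb
      have h1 : 1 < (T.chi (s j)).encard := by
        rw [Set.one_lt_encard_iff]
        exact ⟨v, c (s j), ⟨hvr, hp⟩, hc _, hne⟩
      have := Order.add_one_le_of_lt h1
      rwa [one_add_one_eq_two] at this
  have hn : ‖C (bv u)‖ ^ 2 = ∑' v, ‖C (bv u) v‖ ^ 2 := by
    have := lp.norm_rpow_eq_tsum (p := 2) (by norm_num) (C (bv u))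
    simpa using this
  have hsum : Summable fun v => ‖C (bv u) v‖ ^ 2 := by
    have := (lp.memℓp (C (bv u))).summable (p := 2) (by norm_num)
    simpa using this
  have hsupp : Function.support (fun v => ‖C (bv u) v‖ ^ 2) ⊆ Set.range s := by
    intro v hv
    by_contra hr
    apply hv
    have : C (bv u) v = 0 := by
      apply T.C_bv_zero C hC
      intro j hj hju
      have := T.dep_iter_s9 j v hj
      rw [hju] at this
      exact hr ⟨j, (huniq j v this.symm hju).symm⟩
    simp [this]
  rw [hn, ← hinj.tsum_eq hsupp]
  refine le_trans ?_ (tail_bound (T.dep u))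
  have hle : ∀ k, ‖C (bv u) (s k)‖ ^ 2 ≤ (((T.dep u : ℝ) + k + 1)⁻¹) ^ 2 := by
    intro k
    have := T.C_bv_norm C hC u (s k)
    rw [hsd] at this
    push_cast at this
    gcongr
  refine Summable.tsum_le_tsum hle (hsum.comp_injective hinj) ?_
  have h0 : Summable fun k : ℕ => ((k : ℝ) ^ 2)⁻¹ := Real.summable_nat_pow_inv.mpr (by norm_num)
  have h1 := (summable_nat_add_iff (T.dep u + 1)).mpr h0
  refine h1.congr ?_
  intro k
  push_cast
  rw [inv_pow]
  congr 2
  ring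

lemma adj_bv (T : TreeData V) (C : L2 V →L[ℂ] L2 V)
    (hC : ∀ (f : L2 V) (v : V), C f v = T.cesaro ⇑f v) (u : V) :
    ContinuousLinearMap.adjoint C (bv u) =
      ((T.dep u : ℂ) + 1)⁻¹ • ∑ j ∈ Finset.range (T.dep u + 1), bv (T.par^[j] u) := by
  apply ext_inner_right ℂ
  intro g
  rw [ContinuousLinearMap.adjoint_inner_left, inner_bv, hC, cesaro, inner_smul_left, sum_inner]
  simp [inner_bv]

open scoped Classical in
lemma adj_inner (T : TreeData V) (C : L2 V →L[ℂ] L2 V)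
    (hC : ∀ (f : L2 V) (v : V), C f v = T.cesaro ⇑f v) (x y : V) :
    RCLike.re (inner ℂ (ContinuousLinearMap.adjoint C (bv x)) (ContinuousLinearMap.adjoint C (bv y))) =
      ((T.dep x : ℝ) + 1)⁻¹ * ((T.dep y : ℝ) + 1)⁻¹ *
       ∑ i ∈ Finset.range (T.dep x + 1), ∑ j ∈ Finset.range (T.dep y + 1),
        (if T.par^[i] x = T.par^[j] y then (1:ℝ) else 0) := by
  rw [T.adj_bv C hC, T.adj_bv C hC, inner_smul_left, inner_smul_right, sum_inner]
  simp only [inner_sum, inner_bv, bv_apply]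
  have : (starRingEnd ℂ) ((T.dep x : ℂ) + 1)⁻¹ * (((T.dep y : ℂ) + 1)⁻¹ *
      ∑ i ∈ Finset.range (T.dep x + 1), ∑ j ∈ Finset.range (T.dep y + 1),
        (if T.par^[i] x = T.par^[j] y then (1:ℂ) else 0)) =
      ((((T.dep x : ℝ) + 1)⁻¹ * ((T.dep y : ℝ) + 1)⁻¹ *
       ∑ i ∈ Finset.range (T.dep x + 1), ∑ j ∈ Finset.range (T.dep y + 1),
        (if T.par^[i] x = T.par^[j] y then (1:ℝ) else 0) : ℝ) : ℂ) := by
    push_cast [apply_ite Complex.ofReal]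
    rw [mul_assoc, map_inv₀, map_add, map_one, Complex.conj_natCast]
  rw [this]
  exact Complex.ofReal_re _

lemma adj_self (T : TreeData V) (C : L2 V →L[ℂ] L2 V)
    (hC : ∀ (f : L2 V) (v : V), C f v = T.cesaro ⇑f v) (x : V) :
    ((T.dep x : ℝ) + 1)⁻¹ ≤ ‖ContinuousLinearMap.adjoint C (bv x)‖ ^ 2 := by
  classical
  rw [← inner_self_eq_norm_sq (𝕜 := ℂ), T.adj_inner C hC]
  have : (T.dep x : ℝ) + 1 ≤ ∑ i ∈ Finset.range (T.dep x + 1), ∑ j ∈ Finset.range (T.dep x + 1),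
        (if T.par^[i] x = T.par^[j] x then (1:ℝ) else 0) := by
    calc (T.dep x : ℝ) + 1 = ∑ i ∈ Finset.range (T.dep x + 1), (1 : ℝ) := by simp
      _ ≤ _ := by
        apply Finset.sum_le_sum
        intro i hi
        have := Finset.single_le_sum (s := Finset.range (T.dep x + 1))
          (f := fun j => if T.par^[i] x = T.par^[j] x then (1:ℝ) else 0)
          (fun j _ => by positivity) hi
        simpa using this
  calc ((T.dep x : ℝ) + 1)⁻¹
      = ((T.dep x : ℝ) + 1)⁻¹ * ((T.dep x : ℝ) + 1)⁻¹ * ((T.dep x : ℝ) + 1) := by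
        field_simp
    _ ≤ _ := by gcongr

lemma adj_cross (T : TreeData V) (C : L2 V →L[ℂ] L2 V)
    (hC : ∀ (f : L2 V) (v : V), C f v = T.cesaro ⇑f v) (x y : V) :
    ((T.dep x : ℝ) + 1)⁻¹ * ((T.dep y : ℝ) + 1)⁻¹ ≤
    RCLike.re (inner ℂ (ContinuousLinearMap.adjoint C (bv x))
      (ContinuousLinearMap.adjoint C (bv y))) := by
  classical
  rw [T.adj_inner C hC]
  apply le_mul_of_one_le_right (by positivity)
  have h1 := Finset.single_le_sum (s := Finset.range (T.dep x + 1))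
          (f := fun i => ∑ j ∈ Finset.range (T.dep y + 1),
            if T.par^[i] x = T.par^[j] y then (1:ℝ) else 0)
          (fun j _ => Finset.sum_nonneg (fun _ _ => by positivity))
          (Finset.self_mem_range_succ (T.dep x))
  have h2 := Finset.single_le_sum (s := Finset.range (T.dep y + 1))
          (f := fun j => if T.par^[T.dep x] x = T.par^[j] y then (1:ℝ) else 0)
          (fun j _ => by positivity) (Finset.self_mem_range_succ (T.dep y))
  refine le_trans ?_ (h2.trans h1)
  simp [T.dep_spec_s9]

lemma exists_pair (T : TreeData V) (hleafless : ∀ u : V, (T.chi u).Nonempty) (v : V)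
    (hv : T.branching v) (k : ℕ) :
    ∃ x y, x ≠ y ∧ T.dep x = T.dep v + 1 + k ∧ T.dep y = T.dep v + 1 + k := by
  induction k with
  | zero =>
    have h1 : 1 < (T.chi v).encard := lt_of_lt_of_le (by norm_num) hv
    rw [Set.one_lt_encard_iff] at h1
    obtain ⟨a, b, ha, hb, hab⟩ := h1
    refine ⟨a, b, hab, ?_, ?_⟩
    · rw [T.dep_child ha.1, ha.2]
    · rw [T.dep_child hb.1, hb.2]
  | succ k ih =>
    obtain ⟨x, y, hxy, hx, hy⟩ := ih
    obtain ⟨a, ha⟩ := hleafless x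
    obtain ⟨b, hb⟩ := hleafless y
    refine ⟨a, b, ?_, ?_, ?_⟩
    · rintro rfl
      exact hxy (ha.2.symm.trans hb.2)
    · rw [T.dep_child ha.1, ha.2, hx]; omega
    · rw [T.dep_child hb.1, hb.2, hy]; omega

end TreeData

/-- If the bounded Cesàro operator of a leafless, locally finite rooted
directed tree of finite branching index is hyponormal, then the tree has no branching vertex:
every vertex has exactly one child. -/
theorem cesaro_hyponormal_implies_chain {V : Type} [Countable V] [Infinite V]
    (T : TreeData V)
    (hleafless : ∀ u : V, (T.chi u).Nonempty)
    (hlocfin : ∀ u : V, (T.chi u).Finite)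
    (hfbi : ∃ B : ℕ, ∀ v : V, T.branching v → T.dep v ≤ B)
    (C : L2 V →L[ℂ] L2 V) (hC : ∀ (f : L2 V) (v : V), C f v = T.cesaro ⇑f v)
    (hhypo : ∀ f : L2 V, ‖ContinuousLinearMap.adjoint C f‖ ≤ ‖C f‖) :
    ∀ v : V, (T.chi v).encard = 1 := by
  intro v
  by_contra hne
  have hbr : T.branching v := by
    have h1 : 1 ≤ (T.chi v).encard := Set.one_le_encard_iff_nonempty.mpr (hleafless v)
    have h2 := Order.add_one_le_of_lt (lt_of_le_of_ne h1 (Ne.symm hne))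
    rwa [one_add_one_eq_two] at h2
  obtain ⟨B, hB⟩ := hfbi
  have hvB := hB v hbr
  obtain ⟨x, y, hxy, hx, hy⟩ := T.exists_pair hleafless v hbr (B - T.dep v)
  replace hx : T.dep x = B + 1 := by omega
  replace hy : T.dep y = B + 1 := by omega
  have hnb : ∀ w, B + 1 ≤ T.dep w → ¬ T.branching w := by
    intro w hw hb
    have := hB w hb
    omega
  have h1 := T.C_norm_sq C hC hleafless x (by rw [hx]; exact hnb)
  have h2 := T.C_norm_sq C hC hleafless y (by rw [hy]; exact hnb)
  have h3 := T.C_orth C hC x y hxy (hx.trans hy.symm)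
  have h4 := T.adj_self C hC x
  have h5 := T.adj_self C hC y
  have h6 := T.adj_cross C hC x y
  have h7 := hhypo (TreeData.bv x + TreeData.bv y)
  have h8 := pow_le_pow_left₀ (norm_nonneg _) h7 2
  rw [map_add, map_add, norm_add_sq (𝕜 := ℂ), norm_add_sq (𝕜 := ℂ), h3, map_zero] at h8
  rw [hx] at h1 h4 h6
  rw [hy] at h2 h5 h6
  push_cast at h1 h2 h4 h5 h6
  have hb : (0 : ℝ) ≤ B := Nat.cast_nonneg B
  have key : ((B : ℝ) + 1 + 1 / 2)⁻¹ <
      ((B : ℝ) + 1 + 1)⁻¹ + ((B : ℝ) + 1 + 1)⁻¹ * ((B : ℝ) + 1 + 1)⁻¹ := by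
    have : ((B : ℝ) + 1 + 1)⁻¹ + ((B : ℝ) + 1 + 1)⁻¹ * ((B : ℝ) + 1 + 1)⁻¹ =
        ((B : ℝ) + 3) / ((B : ℝ) + 2) ^ 2 := by
      have : (B : ℝ) + 1 + 1 = B + 2 := by ring
      rw [this]
      field_simp
      ring
    rw [this, inv_eq_one_div, div_lt_div_iff₀ (by positivity) (by positivity)]
    nlinarith
  linarith
end
end
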